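/- arXiv:1210.1559 — 2 statements merged into one kernel-verified Lean document; each statement's English description precedes it below -/
import Mathlib

section
/- Let R be a commutative ring, n ≥ 1, and let (L_i)_{i∈ℤ} be a complete periodic lattice chain in R((u))^n. Then there exist f₁,…,f_m ∈ R generating the unit ideal and, for each j, an element g_j ∈ GL_n(R_{f_j}((u))) such that for every i ∈ ℤ the R_{f_j}[[u]]-submodule of R_{f_j}((u))^n generated by the image of L_i under the coefficientwise localization map equals g_j·Λ̃_i, where (Λ̃_i)_{i∈ℤ} denotes the standard lattice chain over R_{f_j}. Moreover, the stabilizer I(R) = {g ∈ GL_n(R((u))) : g·Λ̃_i = Λ̃_i for all i ∈ ℤ} equals the preimage of the subgroup of upper triangular invertible matrices under the reduction map GL_n(R[[u]]) → GL_n(R), u ↦ 0. -/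
noncomputable section
namespace Pap

variable (R : Type*) [CommRing R]

/-- `u^m` as a Laurent series. -/
def U (m : ℤ) : LaurentSeries R := HahnSeries.single m 1

/-- `R[[u]]` as a `R[[u]]`-submodule of `R((u))`. -/
def psRange : Submodule (PowerSeries R) (LaurentSeries R) :=
  LinearMap.range (Algebra.linearMap (PowerSeries R) (LaurentSeries R))

variable (n : ℕ)

/-- `R((u))^n`. -/
abbrev V := Fin n → LaurentSeries R

instance (priority := 10000) : AddCommGroup (V R n) := Pi.addCommGroup
instance (priority := 10000) : Module (PowerSeries R) (V R n) := Pi.module _ _ _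
instance (priority := 10000) : Module (LaurentSeries R) (V R n) := Pi.module _ _ _

/-- Multiplication by a Laurent series, as an `R[[u]]`-linear endomorphism of `R((u))^n`. -/
def smulV (a : LaurentSeries R) : V R n →ₗ[PowerSeries R] V R n where
  toFun x := a • x
  map_add' x y := smul_add a x y
  map_smul' c x := by
    funext i
    simp only [Pi.smul_apply, RingHom.id_apply, smul_eq_mul]
    simp only [Algebra.smul_def]
    ring

/-- Image of a submodule under multiplication by a Laurent series. -/
def scaleL (a : LaurentSeries R) (L : Submodule (PowerSeries R) (V R n)) :
    Submodule (PowerSeries R) (V R n) := L.map (smulV R n a)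

/-- The standard lattice `R[[u]]^n`. -/
def stdLat : Submodule (PowerSeries R) (V R n) := Submodule.pi Set.univ fun _ => psRange R

/-- The quotient `B/(A ∩ B)`; for `A ≤ B` this is `B/A`. -/
abbrev subQuot (A B : Submodule (PowerSeries R) (V R n)) :=
  B ⧸ (A.comap B.subtype)

/-- A lattice in `R((u))^n`. -/
def IsLattice (L : Submodule (PowerSeries R) (V R n)) : Prop :=
  ∃ N : ℕ, scaleL R n (U R N) (stdLat R n) ≤ L ∧ L ≤ scaleL R n (U R (-(N : ℤ))) (stdLat R n) ∧
    Module.Finite R (RestrictScalars R (PowerSeries R)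
      (subQuot R n L (scaleL R n (U R (-(N : ℤ))) (stdLat R n)))) ∧
    Module.Projective R (RestrictScalars R (PowerSeries R)
      (subQuot R n L (scaleL R n (U R (-(N : ℤ))) (stdLat R n))))

/-- Rank one finite locally free module. -/
def RankOne (A : Type*) [CommRing A] (Q : Type*) [AddCommGroup Q] [Module A Q] : Prop :=
  Module.Finite A Q ∧ Module.Projective A Q ∧
    ∀ (P : Ideal A) [P.IsPrime],
      Module.finrank (Localization P.primeCompl) (LocalizedModule P.primeCompl Q) = 1

/-- Exponent of `u` bounding the `t`-th coordinate of the `j`-th standard lattice. -/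
def dex (j : ℤ) (t : Fin n) : ℤ := (j - ((t : ℤ) + 1)) / n + 1

/-- The standard lattice chain `Λ̃_j`, `j ∈ ℤ`. -/
def stdChain (j : ℤ) : Submodule (PowerSeries R) (V R n) :=
  Submodule.span (PowerSeries R)
    (Set.range fun t : Fin n =>
      (fun s => if s = t then U R (-(dex n j t)) else 0 : V R n))

/-- A complete periodic lattice chain in `R((u))^n`. -/
def IsLatticeChain (L : ℤ → Submodule (PowerSeries R) (V R n)) : Prop :=
  (∀ i, IsLattice R n (L i)) ∧ (∀ i, L i ≤ L (i + 1)) ∧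
    (∀ i, @RankOne R _ (RestrictScalars R (PowerSeries R) (subQuot R n (L i) (L (i + 1)))) _
      (RestrictScalars.module R (PowerSeries R) (subQuot R n (L i) (L (i + 1))))) ∧
    (∀ i, L ((n : ℤ) + i) = scaleL R n (U R (-1)) (L i))

/-- The action of an invertible matrix over `R((u))` on `R[[u]]`-submodules of `R((u))^n`. -/
def glLat (g : GL (Fin n) (LaurentSeries R)) (L : Submodule (PowerSeries R) (V R n)) :
    Submodule (PowerSeries R) (V R n) :=
  L.map ((Matrix.mulVecLin (g : Matrix (Fin n) (Fin n) (LaurentSeries R))).restrictScalars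
    (PowerSeries R))

/-- Coefficientwise map of Laurent series along a ring map. -/
def lsMap {S : Type*} [CommRing S] (f : R →+* S) (x : LaurentSeries R) : LaurentSeries S where
  coeff g := f (x.coeff g)
  isPWO_support' := x.isPWO_support'.mono (fun g hg => by
    simp only [Function.mem_support] at hg ⊢
    intro h; exact hg (by rw [h, map_zero]))

end Pap
end


open Pap

namespace PapAux
section basics
variable {R : Type*} [CommRing R] {n : ℕ}

lemma U_mul (a b : ℤ) : U R a * U R b = U R (a + b) := by
  simp [U, HahnSeries.single_mul_single]

lemma U_zero : U R 0 = 1 := rfl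

lemma coeff_U_mul (a k : ℤ) (x : LaurentSeries R) : (U R a * x).coeff k = x.coeff (k - a) := by
  simp [U, HahnSeries.coeff_single_mul]

lemma ps_smul (p : PowerSeries R) (x : LaurentSeries R) :
    p • x = (HahnSeries.ofPowerSeries ℤ R p) * x := Algebra.smul_def p x

lemma X_smul (x : LaurentSeries R) : (PowerSeries.X : PowerSeries R) • x = U R 1 * x := by
  rw [ps_smul, PowerSeries.coe_X]; rfl

lemma Xpow_smul (k : ℕ) (x : LaurentSeries R) :
    ((PowerSeries.X : PowerSeries R) ^ k) • x = U R k * x := by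
  induction k generalizing x with
  | zero => simp [U_zero]
  | succ k ih => rw [pow_succ, mul_smul, X_smul, ih, ← mul_assoc, U_mul]; simp

lemma mem_psRange (x : LaurentSeries R) : x ∈ psRange R ↔ ∀ k < 0, x.coeff k = 0 := by
  constructor
  · rintro ⟨p, rfl⟩ k hk
    show (HahnSeries.ofPowerSeries ℤ R p).coeff k = 0
    rw [PowerSeries.coeff_coe, if_pos hk]
  · intro h
    refine ⟨PowerSeries.mk fun k => x.coeff k, ?_⟩
    show HahnSeries.ofPowerSeries ℤ R _ = x
    ext k
    rw [PowerSeries.coeff_coe]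
    split_ifs with hk
    · exact (h k hk).symm
    · rw [PowerSeries.coeff_mk]; congr 1; omega

/-- Basis vector scaled by `u^k`. -/
noncomputable def ee (t : Fin n) (k : ℤ) : V R n := fun s => if s = t then U R k else 0

lemma coeff_ps_mul (a : ℤ) (p : PowerSeries R) (x : LaurentSeries R)
    (hx : ∀ k < a, x.coeff k = 0) : ∀ k < a, (p • x).coeff k = 0 := by
  have h1 : U R (-a) * x ∈ psRange R := by
    rw [mem_psRange]; intro k hk; rw [coeff_U_mul]; exact hx _ (by omega)
  have h2 := (psRange R).smul_mem p h1
  rw [mem_psRange] at h2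
  intro k hk
  have h3 := h2 (k - a) (by omega)
  rw [ps_smul, mul_left_comm, ← ps_smul, coeff_U_mul] at h3
  simpa using h3

/-- Vectors with prescribed lower bounds of exponents. -/
def ordLat (d : Fin n → ℤ) : Submodule (PowerSeries R) (V R n) where
  carrier := {x | ∀ t, ∀ k < d t, (x t).coeff k = 0}
  zero_mem' := by intro t k _; simp
  add_mem' := by
    intro x y hx hy t k hk
    simp [hx t k hk, hy t k hk]
  smul_mem' := by
    intro p x hx t
    exact coeff_ps_mul _ p _ (hx t)

lemma mem_ordLat (d : Fin n → ℤ) (x : V R n) :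
    x ∈ ordLat d ↔ ∀ t, ∀ k < d t, (x t).coeff k = 0 := Iff.rfl

lemma exists_ps (a : ℤ) (x : LaurentSeries R) (hx : ∀ k < a, x.coeff k = 0) :
    ∃ p : PowerSeries R, p • U R a = x := by
  have h1 : U R (-a) * x ∈ psRange R := by
    rw [mem_psRange]; intro k hk; rw [coeff_U_mul]; exact hx _ (by omega)
  obtain ⟨p, hp⟩ := h1
  refine ⟨p, ?_⟩
  have hp' : HahnSeries.ofPowerSeries ℤ R p = U R (-a) * x := hp
  rw [ps_smul, hp', mul_right_comm, U_mul]; simp [U_zero]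

lemma span_ee (d : Fin n → ℤ) :
    Submodule.span (PowerSeries R) (Set.range fun t : Fin n => (ee t (d t) : V R n)) = ordLat d := by
  apply le_antisymm
  · rw [Submodule.span_le]
    rintro _ ⟨t, rfl⟩ s k hk
    by_cases h : s = t
    · subst h; simp [ee, U, HahnSeries.coeff_single_of_ne hk.ne]
    · simp [ee, h]
  · intro x hx
    choose p hp using fun t => exists_ps (d t) (x t) (hx t)
    have : x = ∑ t, p t • (ee t (d t) : V R n) := by
      funext s
      rw [Finset.sum_apply, Finset.sum_eq_single s]
      · simp [ee, hp]
      · intro b _ hb; simp [ee, hb.symm]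
      · simp
    rw [this]
    exact Submodule.sum_mem _ fun t _ => Submodule.smul_mem _ _ (Submodule.subset_span ⟨t, rfl⟩)

lemma stdChain_eq (j : ℤ) : stdChain R n j = ordLat fun t => -(dex n j t) := span_ee _

lemma stdLat_eq : stdLat R n = ordLat fun _ => 0 := by
  ext x
  simp only [stdLat, Submodule.mem_pi, mem_ordLat, mem_psRange, Set.mem_univ, true_imp_iff]

lemma mem_scaleL (a : ℤ) (L : Submodule (PowerSeries R) (V R n)) (x : V R n) :
    x ∈ scaleL R n (U R a) L ↔ (U R (-a)) • x ∈ L := by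
  constructor
  · rintro ⟨y, hy, rfl⟩
    show U R (-a) • (U R a • y) ∈ L
    rw [smul_smul, U_mul]; simpa [U_zero] using hy
  · intro h
    refine ⟨_, h, ?_⟩
    show U R a • (U R (-a) • x) = x
    rw [smul_smul, U_mul]; simp [U_zero]

lemma scaleL_ordLat (a : ℤ) (d : Fin n → ℤ) :
    scaleL R n (U R a) (ordLat d) = ordLat fun t => a + d t := by
  ext x
  rw [mem_scaleL, mem_ordLat, mem_ordLat]
  refine forall_congr' fun t => ?_
  constructor
  · intro h k hk
    have := h (k - a) (by omega)
    simpa [coeff_U_mul] using this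
  · intro h k hk
    have := h (k + a) (by omega)
    simpa [coeff_U_mul] using this

lemma dex_le {s t : Fin n} (hst : s ≤ t) (j : ℤ) : dex n j t ≤ dex n j s := by
  have hn : (0 : ℤ) < n := by have := t.2; omega
  have : (s : ℤ) ≤ t := by exact_mod_cast hst
  unfold dex
  have := Int.ediv_le_ediv hn (show j - ((t : ℤ) + 1) ≤ j - ((s : ℤ) + 1) by omega)
  omega

lemma dex_le' (s t : Fin n) (j : ℤ) : dex n j t ≤ dex n j s + 1 := by
  have hn : (0 : ℤ) < n := by have := t.2; omega
  have := s.2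
  have := t.2
  unfold dex
  have := Int.ediv_le_ediv hn (show j - ((t : ℤ) + 1) ≤ j - ((s : ℤ) + 1) + 1 * n by omega)
  rw [Int.add_mul_ediv_right _ _ hn.ne'] at this
  omega

lemma dex_of_lt (r : ℕ) (hr : r ≤ n) (t : Fin n) (h : (t : ℕ) < r) : dex n r t = 1 := by
  unfold dex
  rw [Int.ediv_eq_zero_of_lt (by omega) (by omega)]; rfl

lemma dex_of_ge (r : ℕ) (t : Fin n) (h : r ≤ (t : ℕ)) : dex n r t = 0 := by
  have hn : (0 : ℤ) < n := by have := t.2; omega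
  have := t.2
  unfold dex
  have h2 : ((r : ℤ) - ((t : ℤ) + 1)) / n = -1 := by
    rw [Int.ediv_eq_iff_of_pos hn]
    constructor <;> omega
  rw [h2]; rfl

lemma dex_add (j : ℤ) (t : Fin n) : dex n (n + j) t = dex n j t + 1 := by
  have hn : (0 : ℤ) < n := by have := t.2; omega
  unfold dex
  rw [show (n : ℤ) + j - ((t : ℤ) + 1) = j - ((t : ℤ) + 1) + 1 * n by ring,
    Int.add_mul_ediv_right _ _ hn.ne']

lemma stdChain_add (j : ℤ) : stdChain R n (n + j) = scaleL R n (U R (-1)) (stdChain R n j) := by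
  rw [stdChain_eq, stdChain_eq, scaleL_ordLat]
  congr 1
  funext t
  rw [dex_add]; ring

lemma mulVec_ee (g : Matrix (Fin n) (Fin n) (LaurentSeries R)) (t : Fin n) (k : ℤ) :
    g.mulVec (ee t k) = fun s => U R k * g s t := by
  funext s
  rw [Matrix.mulVec, dotProduct, Finset.sum_eq_single t]
  · simp [ee, mul_comm]
  · intro b _ hb; simp [ee, hb]
  · simp

/-- Integral and upper triangular modulo `u`. -/
def Tri (g : Matrix (Fin n) (Fin n) (LaurentSeries R)) : Prop :=
  (∀ a b, g a b ∈ psRange R) ∧ ∀ a b, b < a → (g a b).coeff 0 = 0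

lemma le_iff (g : GL (Fin n) (LaurentSeries R)) :
    (∀ j, glLat R n g (stdChain R n j) ≤ stdChain R n j) ↔
      Tri (g : Matrix (Fin n) (Fin n) (LaurentSeries R)) := by
  have key : ∀ j, glLat R n g (stdChain R n j) ≤ stdChain R n j ↔
      ∀ s t : Fin n, ∀ k < dex n j t - dex n j s,
        ((g : Matrix (Fin n) (Fin n) (LaurentSeries R)) s t).coeff k = 0 := by
    intro j
    conv_lhs => rw [glLat, Submodule.map_le_iff_le_comap]
    conv_lhs => lhs; unfold stdChain
    rw [Submodule.span_le, stdChain_eq]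
    constructor
    · intro h s t k hk
      have := h ⟨t, rfl⟩
      have h2 : Matrix.mulVec (g : Matrix (Fin n) (Fin n) (LaurentSeries R))
        (ee t (-(dex n j t))) ∈ ordLat (R := R) (fun t => -(dex n j t)) := this
      rw [mulVec_ee] at h2
      have := h2 s (k - dex n j t) (by dsimp only; omega)
      simpa [coeff_U_mul] using this
    · rintro h _ ⟨t, rfl⟩
      show Matrix.mulVec (g : Matrix (Fin n) (Fin n) (LaurentSeries R))
        (ee t (-(dex n j t))) ∈ ordLat (R := R) (fun t => -(dex n j t))
      rw [mulVec_ee]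
      intro s k hk
      have := h s t (k + dex n j t) (by dsimp only at hk; omega)
      simpa [coeff_U_mul] using this
  simp only [key]
  constructor
  · intro h
    refine ⟨fun a b => ?_, fun a b hab => ?_⟩
    · rw [mem_psRange]
      intro k hk
      refine h (0 : ℕ) a b k ?_
      rw [dex_of_ge 0 a (by omega), dex_of_ge 0 b (by omega)]; simpa using hk
    · have hab' : (b : ℕ) < a := hab
      refine h ((b : ℕ) + 1 : ℕ) a b 0 ?_
      rw [dex_of_ge _ a (by omega), dex_of_lt _ (by omega) b (by omega)]; simp
  · rintro ⟨h1, h2⟩ j s t k hk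
    simp only [mem_psRange] at h1
    rcases lt_or_ge k 0 with h0 | h0
    · exact h1 _ _ _ h0
    · have := dex_le' s t j
      obtain rfl : k = 0 := by omega
      apply h2
      by_contra hts
      have := dex_le (not_lt.mp hts) j
      omega

lemma glLat_one (L : Submodule (PowerSeries R) (V R n)) : glLat R n 1 L = L := by
  ext x; simp [glLat]

lemma glLat_mul (g h : GL (Fin n) (LaurentSeries R)) (L : Submodule (PowerSeries R) (V R n)) :
    glLat R n (g * h) L = glLat R n g (glLat R n h L) := by
  ext x; simp [glLat]

lemma glLat_mono (g : GL (Fin n) (LaurentSeries R)) {L L' : Submodule (PowerSeries R) (V R n)}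
    (h : L ≤ L') : glLat R n g L ≤ glLat R n g L' := Submodule.map_mono h

lemma coeff0_mul {x y : LaurentSeries R} (hx : x ∈ psRange R) (hy : y ∈ psRange R) :
    (x * y).coeff 0 = x.coeff 0 * y.coeff 0 := by
  obtain ⟨p, rfl⟩ := hx
  obtain ⟨q, rfl⟩ := hy
  have h : ∀ p : PowerSeries R, (Algebra.linearMap (PowerSeries R) (LaurentSeries R) p).coeff 0
      = PowerSeries.constantCoeff p := by
    intro p
    show (HahnSeries.ofPowerSeries ℤ R p).coeff 0 = _
    rw [PowerSeries.coeff_coe]; simp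
  have h2 : Algebra.linearMap (PowerSeries R) (LaurentSeries R) p *
    Algebra.linearMap (PowerSeries R) (LaurentSeries R) q =
    Algebra.linearMap (PowerSeries R) (LaurentSeries R) (p * q) := by simp
  rw [h2, h, h, h, map_mul]

theorem stab (g : GL (Fin n) (LaurentSeries R)) :
      (∀ i : ℤ, glLat R n g (stdChain R n i) = stdChain R n i) ↔
        ((∀ a b : Fin n,
            ((g : Matrix (Fin n) (Fin n) (LaurentSeries R)) a b) ∈ psRange R) ∧
         (∀ a b : Fin n,
            ((↑(g⁻¹) : Matrix (Fin n) (Fin n) (LaurentSeries R)) a b) ∈ psRange R) ∧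
         (∀ a b : Fin n, b < a →
            ((g : Matrix (Fin n) (Fin n) (LaurentSeries R)) a b).coeff 0 = 0)) := by
  constructor
  · intro h
    have h1 := (le_iff g).1 fun j => (h j).le
    have h2 := (le_iff g⁻¹).1 fun j => by
      conv_lhs => rw [← h j, ← glLat_mul]
      rw [inv_mul_cancel, glLat_one]
    exact ⟨h1.1, h2.1, h1.2⟩
  · rintro ⟨h1, h2, h3⟩
    have a1 := (le_iff g).2 ⟨h1, h3⟩
    have a2 : Tri ((g⁻¹ : GL (Fin n) (LaurentSeries R)) :
        Matrix (Fin n) (Fin n) (LaurentSeries R)) := by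
      refine ⟨h2, ?_⟩
      let G0 : Matrix (Fin n) (Fin n) R := fun a b =>
        ((g : Matrix (Fin n) (Fin n) (LaurentSeries R)) a b).coeff 0
      let H0 : Matrix (Fin n) (Fin n) R := fun a b =>
        ((↑(g⁻¹) : Matrix (Fin n) (Fin n) (LaurentSeries R)) a b).coeff 0
      have e : G0 * H0 = 1 := by
        ext a b
        have : ((g : Matrix (Fin n) (Fin n) (LaurentSeries R)) *
          ((g⁻¹ : GL (Fin n) (LaurentSeries R)) :
            Matrix (Fin n) (Fin n) (LaurentSeries R))) a b = (1 : Matrix _ _ _) a b := by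
          rw [← Units.val_mul, mul_inv_cancel]; rfl
        have := congrArg (fun x : LaurentSeries R => x.coeff 0) this
        simp only [Matrix.mul_apply, HahnSeries.coeff_sum, coeff0_mul (h1 _ _) (h2 _ _)] at this
        rw [Matrix.mul_apply]
        refine this.trans ?_
        by_cases hab : a = b
        · subst hab; simp
        · simp [hab]
      have hinv : H0 = G0⁻¹ := (Matrix.inv_eq_right_inv e).symm
      have hT : G0.BlockTriangular id := fun a b hab => h3 a b hab
      have : Invertible G0 := Matrix.invertibleOfIsUnitDet _ ((Matrix.isUnit_iff_isUnit_det _).1 (IsUnit.of_mul_eq_one _ e))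
      have := Matrix.blockTriangular_inv_of_blockTriangular hT
      rw [← hinv] at this
      intro a b hab
      exact this hab
    have a3 := (le_iff g⁻¹).2 a2
    intro i
    refine le_antisymm (a1 i) ?_
    have := glLat_mono g (a3 i)
    rwa [← glLat_mul, mul_inv_cancel, glLat_one] at this

end basics
end PapAux

namespace PapAux
section absalg
variable {R : Type*} [CommRing R]

lemma ps_decomp (m : ℕ) (p : PowerSeries R) :
    ∃ q : PowerSeries R, p = (∑ i : Fin m, algebraMap R (PowerSeries R) (PowerSeries.coeff i p) *
      PowerSeries.X ^ (i : ℕ)) + PowerSeries.X ^ m * q := by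
  have : (PowerSeries.X : PowerSeries R) ^ m ∣
      p - (∑ i : Fin m, algebraMap R (PowerSeries R) (PowerSeries.coeff i p) *
      PowerSeries.X ^ (i : ℕ)) := by
    rw [PowerSeries.X_pow_dvd_iff]
    intro k hk
    rw [map_sub, map_sum, Finset.sum_eq_single ⟨k, hk⟩]
    · simp [PowerSeries.coeff_X_pow]
    · intro b _ hb
      have : k ≠ b := fun h => hb (Fin.ext h.symm)
      simp [PowerSeries.coeff_X_pow, this]
    · simp
  obtain ⟨q, hq⟩ := this
  exact ⟨q, by rw [← hq]; ring⟩

/-- A submodule of a finite module over `R[[X]]` with `R`-projective `X`-power-torsion quotient is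
finitely generated. -/
lemma fg_of_proj {B : Type*} [AddCommGroup B] [Module (PowerSeries R) B]
    [Module.Finite (PowerSeries R) B] (L : Submodule (PowerSeries R) B) (m : ℕ)
    (hm : ∀ b : B, (PowerSeries.X ^ m : PowerSeries R) • b ∈ L)
    (hP : Module.Projective R (RestrictScalars R (PowerSeries R) (B ⧸ L))) : L.FG := by
  let π : RestrictScalars R (PowerSeries R) B →ₗ[R]
      RestrictScalars R (PowerSeries R) (B ⧸ L) :=
    { toFun := fun x => (L.mkQ x : B ⧸ L)
      map_add' := fun x y => L.mkQ.map_add x y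
      map_smul' := fun r x => L.mkQ.map_smul (algebraMap R (PowerSeries R) r) x }
  have hπ : Function.Surjective π := L.mkQ_surjective
  obtain ⟨s, hs⟩ := Module.projective_lifting_property π LinearMap.id hπ
  have hs' : ∀ q, π (s q) = q := fun q => LinearMap.congr_fun hs q
  obtain ⟨σ, σ_smul, σ_mk, σ_zero⟩ : ∃ σ : B →+ B,
      (∀ (r : R) x, σ (algebraMap R (PowerSeries R) r • x)
        = algebraMap R (PowerSeries R) r • σ x) ∧ (∀ x, L.mkQ (σ x) = L.mkQ x) ∧
      (∀ x ∈ L, σ x = 0) := by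
    refine ⟨(s ∘ₗ π).toAddMonoidHom, fun r x => (s ∘ₗ π).map_smul r x,
      fun x => hs' (π x), fun x hx => ?_⟩
    have : π x = 0 := (Submodule.Quotient.mk_eq_zero L).2 hx
    show s (π x) = 0
    rw [this, map_zero]
  let P : B →+ B := AddMonoidHom.id B - σ
  have P_apply : ∀ x, P x = x - σ x := fun x => rfl
  have P_smul : ∀ (r : R) x, P (algebraMap R (PowerSeries R) r • x)
      = algebraMap R (PowerSeries R) r • P x := by
    intro r x
    rw [P_apply, P_apply, σ_smul, smul_sub]
  have P_mem : ∀ x, P x ∈ L := by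
    intro x
    rw [← Submodule.Quotient.mk_eq_zero, P_apply]
    show L.mkQ (x - σ x) = 0
    rw [map_sub, σ_mk, sub_self]
  have P_id : ∀ x ∈ L, P x = x := by
    intro x hx
    rw [P_apply, σ_zero x hx, sub_zero]
  obtain ⟨k, b, hb⟩ := Module.Finite.exists_fin (R := PowerSeries R) (M := B)
  let T : Set B := (Set.range fun ij : Fin k × Fin m =>
      P ((PowerSeries.X ^ (ij.2 : ℕ) : PowerSeries R) • b ij.1)) ∪
      Set.range fun i : Fin k => (PowerSeries.X ^ m : PowerSeries R) • b i
  have hT : T.Finite := (Set.finite_range _).union (Set.finite_range _)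
  have key : Submodule.span (PowerSeries R) T = L := by
    apply le_antisymm
    · rw [Submodule.span_le]
      rintro _ (⟨ij, rfl⟩ | ⟨i, rfl⟩)
      · exact P_mem _
      · exact hm _
    · intro x hx
      have hxs : x ∈ Submodule.span (PowerSeries R) (Set.range b) := by rw [hb]; trivial
      rw [Submodule.mem_span_range_iff_exists_fun] at hxs
      obtain ⟨c, hc⟩ := hxs
      rw [← P_id x hx, ← hc, map_sum]
      refine Submodule.sum_mem _ fun i _ => ?_
      obtain ⟨q, hq⟩ := ps_decomp m (c i)
      rw [hq, add_smul, map_add, Finset.sum_smul, map_sum]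
      refine Submodule.add_mem _ (Submodule.sum_mem _ fun j _ => ?_) ?_
      · rw [mul_smul, P_smul]
        exact Submodule.smul_mem _ _ (Submodule.subset_span (Or.inl ⟨(i, j), rfl⟩))
      · rw [mul_smul, P_id _ (hm _), smul_comm]
        exact Submodule.smul_mem _ _ (Submodule.subset_span (Or.inr ⟨i, rfl⟩))
  rw [← key]
  exact Submodule.fg_span hT

/-- A rank one module is generated by one element near every prime. -/
lemma rankOne_local {Q : Type*} [AddCommGroup Q] [Module R Q] (h : RankOne R Q)
    (P : Ideal R) [P.IsPrime] : ∃ f ∉ P, ∃ v : Q, ∀ x : Q, ∃ r : R, f • x = r • v := by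
  obtain ⟨h1, h2, h3⟩ := h
  have h3 := h3 P
  have : Module.Free (Localization P.primeCompl) (LocalizedModule P.primeCompl Q) := by
    have : Module.Finite (Localization P.primeCompl) (LocalizedModule P.primeCompl Q) :=
      inferInstance
    have : Module.Flat (Localization P.primeCompl) (LocalizedModule P.primeCompl Q) :=
      inferInstance
    have : IsLocalRing (Localization P.primeCompl) :=
      inferInstanceAs (IsLocalRing (Localization.AtPrime P))
    exact Module.free_of_flat_of_isLocalRing
  have : Nontrivial (Localization P.primeCompl) :=
      inferInstanceAs (Nontrivial (Localization.AtPrime P))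
  rw [finrank_eq_one_iff'] at h3
  obtain ⟨w, -, hw⟩ := h3
  induction w with
  | _ v s0 =>
  have loc : ∀ x : Q, ∃ f ∉ P, ∃ r : R, f • x = r • v := by
    intro x
    obtain ⟨c, hc⟩ := hw (LocalizedModule.mk x 1)
    induction c using Localization.induction_on with
    | _ y =>
    obtain ⟨a, s⟩ := y
    rw [LocalizedModule.mk_smul_mk, LocalizedModule.mk_eq] at hc
    obtain ⟨u, hu⟩ := hc
    refine ⟨u * (s * s0), ?_, u * a, ?_⟩
    · exact (u * (s * s0)).2
    · rw [one_smul] at hu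
      rw [mul_smul, mul_smul (u : R) a v]
      exact hu.symm
  obtain ⟨k, b, hb⟩ := Module.Finite.exists_fin (R := R) (M := Q)
  choose f hf r hr using fun i => loc (b i)
  refine ⟨∏ i, f i, ?_, v, ?_⟩
  · have : (∏ i, f i) ∈ P.primeCompl := Submonoid.prod_mem _ fun i _ => hf i
    exact this
  · intro x
    have hx : x ∈ Submodule.span R (Set.range b) := by rw [hb]; trivial
    have : ∀ x ∈ Submodule.span R (Set.range b),
        (∏ i, f i) • x ∈ Submodule.span R {v} := by
      intro x hx
      induction hx using Submodule.span_induction with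
      | mem x h =>
        obtain ⟨i, rfl⟩ := h
        rw [← Finset.mul_prod_erase _ _ (Finset.mem_univ i), mul_comm, mul_smul, hr]
        exact Submodule.smul_mem _ _ (Submodule.smul_mem _ _ (Submodule.mem_span_singleton_self v))
      | zero => simp
      | add x y _ _ hx hy => rw [smul_add]; exact Submodule.add_mem _ hx hy
      | smul a x _ hx => rw [smul_comm]; exact Submodule.smul_mem _ _ hx
    obtain ⟨r, hr⟩ := Submodule.mem_span_singleton.1 (this x hx)
    exact ⟨r, hr.symm⟩

end absalg
end PapAux

namespace PapAux
section chain
variable {R : Type*} [CommRing R] {n : ℕ}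

lemma isLattice_fg {L : Submodule (PowerSeries R) (V R n)} (h : IsLattice R n L) : L.FG := by
  obtain ⟨N, h1, h2, -, h4⟩ := h
  have hB : scaleL R n (U R (-(N : ℤ))) (stdLat R n) = ordLat fun _ => -(N : ℤ) := by
    rw [stdLat_eq, scaleL_ordLat]; simp
  have hT : scaleL R n (U R (N : ℤ)) (stdLat R n) = ordLat fun _ => (N : ℤ) := by
    rw [stdLat_eq, scaleL_ordLat]; simp
  generalize hBd : scaleL R n (U R (-(N : ℤ))) (stdLat R n) = B at *
  have hfin : Module.Finite (PowerSeries R) B := by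
    rw [Module.Finite.iff_fg, hB, ← span_ee]
    exact Submodule.fg_span (Set.finite_range _)
  have := fg_of_proj (L.comap B.subtype) (2 * N) ?_ h4
  · have h5 := this.map B.subtype
    rwa [Submodule.map_comap_subtype, inf_eq_right.2 h2] at h5
  · rintro ⟨b, hb⟩
    apply h1
    rw [hB] at hb
    rw [hT]
    intro t k hk
    show ((PowerSeries.X ^ (2 * N) : PowerSeries R) • b t).coeff k = 0
    rw [Xpow_smul, coeff_U_mul]
    apply hb
    dsimp only at hk ⊢
    push_cast
    omega

lemma X_smul_V (x : V R n) : (PowerSeries.X : PowerSeries R) • x = U R 1 • x := by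
  funext t; exact X_smul _

lemma glLat_scaleL (g : GL (Fin n) (LaurentSeries R)) (a : ℤ)
    (L : Submodule (PowerSeries R) (V R n)) :
    glLat R n g (scaleL R n (U R a) L) = scaleL R n (U R a) (glLat R n g L) := by
  unfold glLat scaleL
  rw [← Submodule.map_comp, ← Submodule.map_comp]
  congr 1
  refine LinearMap.ext fun x => ?_
  exact Matrix.mulVec_smul (g : Matrix (Fin n) (Fin n) (LaurentSeries R)) (U R a) x

lemma scaleL_inj (a : ℤ) {L L' : Submodule (PowerSeries R) (V R n)}
    (h : scaleL R n (U R a) L = scaleL R n (U R a) L') : L = L' := by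
  ext x
  have := congrArg (fun M => U R a • x ∈ M) h
  simp only [mem_scaleL, smul_smul, U_mul] at this
  simpa [U_zero] using this

theorem chain_main (hn : 1 ≤ n) (M : ℤ → Submodule (PowerSeries R) (V R n))
    (hmono : ∀ i, M i ≤ M (i + 1))
    (hper : ∀ i, M ((n : ℤ) + i) = scaleL R n (U R (-1)) (M i))
    (hfg : ∀ i, (M i).FG)
    (hspan : ∀ t : Fin n, ∃ N : ℤ, ee t N ∈ M n)
    (v : Fin n → V R n) (hv : ∀ t : Fin n, v t ∈ M ((t : ℕ) + 1 : ℕ))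
    (hgen : ∀ t : Fin n, M ((t : ℕ) + 1 : ℕ) ≤
      Submodule.span (PowerSeries R) {v t} ⊔ M ((t : ℕ) : ℤ)) :
    ∃ g : GL (Fin n) (LaurentSeries R), ∀ i : ℤ, M i = glLat R n g (stdChain R n i) := by
  have mono : Monotone M := monotone_int_of_le_succ hmono
  have hMn : ∀ x, x ∈ M n → (PowerSeries.X : PowerSeries R) • x ∈ M 0 := by
    intro x hx
    have := hper 0
    rw [add_zero] at this
    rw [this, mem_scaleL] at hx
    rw [X_smul_V]; simpa using hx
  have hM0 : ∀ x, x ∈ M 0 → ∃ y ∈ M n, x = (PowerSeries.X : PowerSeries R) • y := by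
    intro x hx
    refine ⟨U R (-1) • x, ?_, ?_⟩
    · have := hper 0
      rw [add_zero] at this
      rw [this, mem_scaleL, smul_smul, U_mul]; simpa [U_zero] using hx
    · rw [X_smul_V, smul_smul, U_mul]; simp [U_zero]
  have hstep : ∀ k : ℕ, k ≤ n → M k ≤
      Submodule.span (PowerSeries R) {x | ∃ t : Fin n, (t : ℕ) < k ∧ x = v t} ⊔ M 0 := by
    intro k
    induction k with
    | zero => intro _; exact le_sup_right
    | succ k ih =>
      intro hk
      refine (hgen ⟨k, hk⟩).trans (sup_le ?_ ((ih (by omega)).trans ?_))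
      · refine le_sup_of_le_left (Submodule.span_mono ?_)
        rintro _ rfl
        exact ⟨_, Nat.lt_succ_self k, rfl⟩
      · refine sup_le_sup_right (Submodule.span_mono ?_) _
        rintro _ ⟨t, ht, rfl⟩
        exact ⟨t, by omega, rfl⟩
  have hvn : ∀ t, v t ∈ M n := fun t => mono (by have := t.2; exact_mod_cast this) (hv t)
  have hMnv : M n = Submodule.span (PowerSeries R) (Set.range v) := by
    apply le_antisymm
    · apply Submodule.le_of_le_smul_of_le_jacobson_bot
        (I := Ideal.span {(PowerSeries.X : PowerSeries R)}) (hfg n)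
      · rw [Ideal.span_le, Set.singleton_subset_iff, SetLike.mem_coe, Ideal.mem_jacobson_bot]
        intro y
        rw [PowerSeries.isUnit_iff_constantCoeff]
        simp
      · refine (hstep n le_rfl).trans (sup_le_sup (Submodule.span_mono ?_) ?_)
        · rintro _ ⟨t, -, rfl⟩; exact ⟨t, rfl⟩
        · intro x hx
          obtain ⟨y, hy, rfl⟩ := hM0 x hx
          exact Submodule.smul_mem_smul (Ideal.mem_span_singleton_self _) hy
    · rw [Submodule.span_le]
      rintro _ ⟨t, rfl⟩
      exact hvn t
  let A : Matrix (Fin n) (Fin n) (LaurentSeries R) := fun s t => U R 1 * v t s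
  have hA : ∀ t k, A.mulVec (ee t k) = U R (k + 1) • v t := by
    intro t k
    rw [mulVec_ee]
    funext s
    show U R k * (U R 1 * v t s) = U R (k + 1) * v t s
    rw [← mul_assoc, U_mul]
  have hsurj : Function.Surjective A.mulVec := by
    have hr : ∀ x ∈ M n, x ∈ LinearMap.range A.mulVecLin := by
      intro x hx
      rw [hMnv, Submodule.mem_span_range_iff_exists_fun] at hx
      obtain ⟨c, rfl⟩ := hx
      refine Submodule.sum_mem _ fun t _ => ?_
      have : c t • v t = (HahnSeries.ofPowerSeries ℤ R (c t)) • v t := by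
        funext s; exact ps_smul _ _
      rw [this]
      refine Submodule.smul_mem _ _ ⟨ee t (-1), ?_⟩
      rw [Matrix.mulVecLin_apply, hA]; simp [U_zero]
    have : LinearMap.range A.mulVecLin = ⊤ := by
      rw [eq_top_iff]
      intro x _
      have hx : x = ∑ t, x t • (ee t 0 : V R n) := by
        funext s
        rw [Finset.sum_apply, Finset.sum_eq_single s]
        · simp [ee, U_zero]
        · intro b _ hb; simp [ee, hb.symm]
        · simp
      rw [hx]
      refine Submodule.sum_mem _ fun t _ => Submodule.smul_mem _ _ ?_
      obtain ⟨N, hN⟩ := hspan t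
      have : (ee t 0 : V R n) = U R (-N) • ee t N := by
        funext s
        by_cases h : s = t
        · simp [ee, h, U_mul]
        · simp [ee, h]
      rw [this]
      exact Submodule.smul_mem _ _ (hr _ hN)
    exact LinearMap.range_eq_top.1 this
  obtain ⟨g, hg⟩ := Matrix.mulVec_surjective_iff_isUnit.1 hsurj
  refine ⟨g, ?_⟩
  have base : ∀ r : ℕ, r < n → M r = glLat R n g (stdChain R n r) := by
    intro r hrn
    have e : glLat R n g (stdChain R n r) = Submodule.span (PowerSeries R)
        (Set.range fun t : Fin n => U R (-(dex n r t) + 1) • v t) := by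
      unfold glLat stdChain
      rw [Submodule.map_span, ← Set.range_comp]
      congr 2
      funext t
      show Matrix.mulVec (g : Matrix (Fin n) (Fin n) (LaurentSeries R))
        (ee t (-(dex n r t))) = _
      rw [hg, hA]
    rw [e]
    have e1 : ∀ t : Fin n, (t : ℕ) < r → U R (-(dex n r t) + 1) • v t = v t := by
      intro t ht
      rw [dex_of_lt r hrn.le t ht]; simp [U_zero]
    have e2 : ∀ t : Fin n, r ≤ (t : ℕ) →
        U R (-(dex n r t) + 1) • v t = (PowerSeries.X : PowerSeries R) • v t := by
      intro t ht
      rw [dex_of_ge r t ht, X_smul_V]; simp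
    apply le_antisymm
    · refine (hstep r hrn.le).trans (sup_le ?_ ?_)
      · rw [Submodule.span_le]
        rintro _ ⟨t, ht, rfl⟩
        exact Submodule.subset_span ⟨t, e1 t ht⟩
      · intro x hx
        obtain ⟨y, hy, rfl⟩ := hM0 x hx
        rw [hMnv, Submodule.mem_span_range_iff_exists_fun] at hy
        obtain ⟨c, rfl⟩ := hy
        rw [Finset.smul_sum]
        refine Submodule.sum_mem _ fun t _ => ?_
        rw [smul_comm]
        refine Submodule.smul_mem _ _ ?_
        have hm : U R (-(dex n r t) + 1) • v t ∈ Submodule.span (PowerSeries R)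
          (Set.range fun t : Fin n => U R (-(dex n r t) + 1) • v t) :=
            Submodule.subset_span ⟨t, rfl⟩
        rcases lt_or_ge (t : ℕ) r with h | h
        · rw [e1 t h] at hm
          exact Submodule.smul_mem _ _ hm
        · rwa [e2 t h] at hm
    · rw [Submodule.span_le]
      rintro _ ⟨t, rfl⟩
      show U R (-(dex n r t) + 1) • v t ∈ M r
      rcases lt_or_ge (t : ℕ) r with h | h
      · rw [e1 t h]
        exact mono (by exact_mod_cast h) (hv t)
      · rw [e2 t h]
        exact mono (by exact_mod_cast Nat.zero_le r) (hMn _ (hvn t))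
  have step : ∀ i, M i = glLat R n g (stdChain R n i) ↔
      M (n + i) = glLat R n g (stdChain R n (n + i)) := by
    intro i
    rw [hper, stdChain_add, glLat_scaleL]
    exact ⟨fun h => by rw [h], fun h => scaleL_inj _ h⟩
  have all : ∀ (q : ℤ) (r : ℕ), r < n → M (n * q + r) = glLat R n g (stdChain R n (n * q + r)) := by
    intro q r hr
    induction q using Int.induction_on with
    | zero => simpa using base r hr
    | succ k ih =>
      rw [step] at ih
      convert ih using 2 <;> ring_nf
    | pred k ih =>
      rw [step]
      convert ih using 2 <;> ring_nf
  intro i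
  have hn' : (0 : ℤ) < n := by exact_mod_cast hn
  have h1 := Int.emod_nonneg i hn'.ne'
  have h2 := Int.emod_lt_of_pos i hn'
  have := all (i / n) (i % n).toNat (by omega)
  rwa [Int.toNat_of_nonneg h1, Int.mul_ediv_add_emod] at this

end chain
end PapAux

namespace PapAux
section final
variable {R : Type*} [CommRing R] {n : ℕ}

lemma good_local (L : ℤ → Submodule (PowerSeries R) (V R n)) (hL : IsLatticeChain R n L) (i : ℤ)
    (P : Ideal R) [P.IsPrime] : ∃ f ∉ P, ∃ v ∈ L (i + 1), ∀ x ∈ L (i + 1), ∃ r : R,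
      algebraMap R (PowerSeries R) f • x - algebraMap R (PowerSeries R) r • v ∈ L i := by
  obtain ⟨f, hf, v, hv⟩ := @rankOne_local R _
    (RestrictScalars R (PowerSeries R) (subQuot R n (L i) (L (i + 1)))) _
    (RestrictScalars.module R (PowerSeries R) (subQuot R n (L i) (L (i + 1)))) (hL.2.2.1 i) P _
  refine ⟨f, hf, ?_⟩
  obtain ⟨⟨w, hw⟩, rfl⟩ := Submodule.Quotient.mk_surjective _ v
  refine ⟨w, hw, fun x hx => ?_⟩
  obtain ⟨r, hr⟩ := hv (Submodule.Quotient.mk ⟨x, hx⟩ : subQuot R n (L i) (L (i + 1)))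
  refine ⟨r, ?_⟩
  have hr' : (Submodule.Quotient.mk (algebraMap R (PowerSeries R) f • ⟨x, hx⟩) :
      subQuot R n (L i) (L (i + 1))) =
      Submodule.Quotient.mk (algebraMap R (PowerSeries R) r • ⟨w, hw⟩) := hr
  rw [Submodule.Quotient.eq] at hr'
  exact hr'

/-- `f` is good if each successive quotient becomes cyclic after inverting `f`. -/
def Good (L : ℤ → Submodule (PowerSeries R) (V R n)) (f : R) : Prop :=
  ∀ t : Fin n, ∃ v ∈ L ((t : ℕ) + 1 : ℕ), ∀ x ∈ L ((t : ℕ) + 1 : ℕ), ∃ r : R,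
      algebraMap R (PowerSeries R) f • x - algebraMap R (PowerSeries R) r • v ∈ L (t : ℕ)

lemma good_span (L : ℤ → Submodule (PowerSeries R) (V R n)) (hL : IsLatticeChain R n L) :
    Ideal.span {f | Good L f} = ⊤ := by
  by_contra hne
  obtain ⟨P, hP, hle⟩ := Ideal.exists_le_maximal _ hne
  have := hP.isPrime
  choose f hf v hv H using fun t : Fin n => good_local L hL (t : ℕ) P
  have h1 : (∏ t, f t) ∈ P.primeCompl := Submonoid.prod_mem _ fun t _ => hf t
  refine h1 (hle (Ideal.subset_span ?_))
  intro t
  refine ⟨v t, by simpa using hv t, fun x hx => ?_⟩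
  obtain ⟨r, hr⟩ := H t x (by simpa using hx)
  refine ⟨(∏ s ∈ Finset.univ.erase t, f s) * r, ?_⟩
  rw [← Finset.mul_prod_erase _ _ (Finset.mem_univ t), mul_comm, map_mul, map_mul, mul_smul,
    mul_smul, ← smul_sub]
  exact Submodule.smul_mem _ _ hr

variable {S : Type*} [CommRing S] (f : R →+* S)

lemma lsMap_coeff (x : LaurentSeries R) (k : ℤ) : (lsMap R f x).coeff k = f (x.coeff k) := rfl

lemma lsMap_add (x y : LaurentSeries R) : lsMap R f (x + y) = lsMap R f x + lsMap R f y := by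
  ext k; simp [lsMap_coeff]

lemma lsMap_sub (x y : LaurentSeries R) : lsMap R f (x - y) = lsMap R f x - lsMap R f y := by
  ext k; simp [lsMap_coeff]

lemma lsMap_zero : lsMap R f 0 = 0 := by
  ext k; simp [lsMap_coeff]

lemma lsMap_U (a : ℤ) : lsMap R f (U R a) = U S a := by
  ext k
  rw [lsMap_coeff]
  by_cases h : k = a
  · subst h; simp [U]
  · simp [U, HahnSeries.coeff_single_of_ne h]

lemma lsMap_mul (x y : LaurentSeries R) : lsMap R f (x * y) = lsMap R f x * lsMap R f y := by
  ext k
  have hs : ∀ z : LaurentSeries R, (lsMap R f z).support ⊆ z.support := by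
    intro z a ha h
    apply ha
    rw [lsMap_coeff, h, map_zero]
  rw [lsMap_coeff, HahnSeries.coeff_mul, map_sum,
    HahnSeries.coeff_mul_left' x.isPWO_support (hs x)]
  symm
  apply Finset.sum_subset_zero_on_sdiff
  · intro ij h
    simp only [Finset.mem_antidiagonal] at h ⊢
    exact ⟨h.1, hs y h.2.1, h.2.2⟩
  · intro ij h
    simp only [Finset.mem_sdiff, Finset.mem_antidiagonal, not_and] at h
    rw [map_mul]
    have : f (y.coeff ij.2) = 0 := by
      by_contra hne
      exact h.2 h.1.1 hne h.1.2.2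
    rw [this, mul_zero]
  · intro ij _
    simp [lsMap_coeff]

lemma lsMap_smul (p : PowerSeries R) (x : LaurentSeries R) :
    lsMap R f (p • x) = PowerSeries.map f p • lsMap R f x := by
  rw [ps_smul, ps_smul, lsMap_mul]
  congr 1
  ext k
  rw [lsMap_coeff, PowerSeries.coeff_coe, PowerSeries.coeff_coe]
  split_ifs <;> simp

/-- Coefficientwise map on vectors. -/
noncomputable def phi : V R n →+ V S n where
  toFun x := fun t => lsMap R f (x t)
  map_zero' := by funext t; exact lsMap_zero f
  map_add' x y := by funext t; exact lsMap_add f _ _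

lemma phi_smul (p : PowerSeries R) (x : V R n) :
    phi f (p • x) = PowerSeries.map f p • phi f x := by
  funext t; exact lsMap_smul f _ _

lemma phi_U (a : ℤ) (x : V R n) : phi f (U R a • x) = U S a • phi f x := by
  funext t
  show lsMap R f (U R a * x t) = U S a * lsMap R f (x t)
  rw [lsMap_mul, lsMap_U]

lemma phi_ee (t : Fin n) (a : ℤ) : phi f (ee t a : V R n) = ee t a := by
  funext s
  show lsMap R f (ee t a s) = ee t a s
  by_cases h : s = t
  · simp [ee, h, lsMap_U]
  · simp [ee, h, lsMap_zero]

/-- Base change of a submodule. -/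
noncomputable def bc (L : Submodule (PowerSeries R) (V R n)) :
    Submodule (PowerSeries S) (V S n) :=
  Submodule.span (PowerSeries S) (phi f '' (L : Set (V R n)))

lemma bc_span (T : Set (V R n)) : bc f (Submodule.span (PowerSeries R) T) =
    Submodule.span (PowerSeries S) (phi f '' T) := by
  apply le_antisymm
  · unfold bc
    rw [Submodule.span_le]
    rintro _ ⟨x, hx, rfl⟩
    rw [SetLike.mem_coe] at hx ⊢
    induction hx using Submodule.span_induction with
    | mem x h => exact Submodule.subset_span ⟨x, h, rfl⟩
    | zero => simp
    | add x y _ _ hx hy => rw [map_add]; exact Submodule.add_mem _ hx hy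
    | smul a x _ hx => rw [phi_smul]; exact Submodule.smul_mem _ _ hx
  · exact Submodule.span_mono (Set.image_mono Submodule.subset_span)

lemma bc_fg {L : Submodule (PowerSeries R) (V R n)} (h : L.FG) : (bc f L).FG := by
  obtain ⟨T, hT, rfl⟩ := Submodule.fg_def.1 h
  rw [bc_span]
  exact Submodule.fg_span (hT.image _)

lemma bc_mono {L L' : Submodule (PowerSeries R) (V R n)} (h : L ≤ L') : bc f L ≤ bc f L' :=
  Submodule.span_mono (Set.image_mono h)

lemma bc_scaleL (a : ℤ) (L : Submodule (PowerSeries R) (V R n)) :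
    bc f (scaleL R n (U R a) L) = scaleL S n (U S a) (bc f L) := by
  unfold bc scaleL
  rw [Submodule.map_span, Submodule.map_coe, Set.image_image, Set.image_image]
  congr 1
  apply Set.image_congr
  intro x _
  exact phi_U f a x

lemma mem_bc {L : Submodule (PowerSeries R) (V R n)} {x : V R n} (h : x ∈ L) :
    phi f x ∈ bc f L := Submodule.subset_span ⟨x, h, rfl⟩

theorem local_main (hn : 1 ≤ n) (L : ℤ → Submodule (PowerSeries R) (V R n))
    (hL : IsLatticeChain R n L) (a : R) (ha : Good L a) (hu : IsUnit (f a)) :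
    ∃ g : GL (Fin n) (LaurentSeries S), ∀ i : ℤ, bc f (L i) = glLat S n g (stdChain S n i) := by
  choose v hv hx using ha
  refine chain_main hn (fun i => bc f (L i)) (fun i => bc_mono f (hL.2.1 i)) ?_
    (fun i => bc_fg f (isLattice_fg (hL.1 i))) ?_ (fun t => phi f (v t)) (fun t => mem_bc f (hv t)) ?_
  · intro i
    show bc f (L (n + i)) = _
    rw [hL.2.2.2, bc_scaleL]
  · intro t
    obtain ⟨N, hN, -⟩ := hL.1 n
    refine ⟨N, ?_⟩
    rw [← phi_ee f]
    apply mem_bc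
    apply hN
    rw [stdLat_eq, scaleL_ordLat, ← span_ee]
    exact Submodule.subset_span ⟨t, by simp⟩
  · intro t
    show bc f (L _) ≤ _
    unfold bc
    rw [Submodule.span_le]
    rintro _ ⟨x, hxL, rfl⟩
    obtain ⟨r, hr⟩ := hx t x hxL
    have h1 := mem_bc f hr
    rw [map_sub, phi_smul, phi_smul] at h1
    have h2 : PowerSeries.map f (algebraMap R (PowerSeries R) a) • phi f x ∈
        Submodule.span (PowerSeries S) {phi f (v t)} ⊔ bc f (L (t : ℕ)) := by
      rw [← add_sub_cancel (PowerSeries.map f (algebraMap R (PowerSeries R) r) • phi f (v t))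
        (PowerSeries.map f (algebraMap R (PowerSeries R) a) • phi f x)]
      exact Submodule.add_mem_sup
        (Submodule.smul_mem _ _ (Submodule.mem_span_singleton_self _)) h1
    have hu' : IsUnit (PowerSeries.map f (algebraMap R (PowerSeries R) a)) := by
      rw [PowerSeries.isUnit_iff_constantCoeff]
      simpa using hu
    exact (Submodule.smul_mem_iff_of_isUnit _ hu').1 h2

end final
end PapAux

open Pap in
/-- Every complete periodic lattice chain is, Zariski-locally on `R`, a `GL_n(R((u)))`-translate of
the standard lattice chain; and the stabilizer of the standard chain is the preimage of the upper
triangular matrices under the reduction `GL_n(R[[u]]) → GL_n(R)`, `u ↦ 0`. -/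
theorem stmt6 (R : Type*) [CommRing R] (n : ℕ) (hn : 1 ≤ n)
    (L : ℤ → Submodule (PowerSeries R) (V R n)) (hL : IsLatticeChain R n L) :
    (∃ (m : ℕ) (fs : Fin m → R), Ideal.span (Set.range fs) = ⊤ ∧
      ∀ j : Fin m, ∃ g : GL (Fin n) (LaurentSeries (Localization.Away (fs j))),
        ∀ i : ℤ,
          Submodule.span (PowerSeries (Localization.Away (fs j)))
            ((fun x : V R n => fun t =>
                lsMap R (algebraMap R (Localization.Away (fs j))) (x t)) ''
              (L i : Set (V R n)))
            = glLat (Localization.Away (fs j)) n g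
                (stdChain (Localization.Away (fs j)) n i)) ∧
    (∀ g : GL (Fin n) (LaurentSeries R),
      (∀ i : ℤ, glLat R n g (stdChain R n i) = stdChain R n i) ↔
        ((∀ a b : Fin n,
            ((g : Matrix (Fin n) (Fin n) (LaurentSeries R)) a b) ∈ psRange R) ∧
         (∀ a b : Fin n,
            ((↑(g⁻¹) : Matrix (Fin n) (Fin n) (LaurentSeries R)) a b) ∈ psRange R) ∧
         (∀ a b : Fin n, b < a →
            ((g : Matrix (Fin n) (Fin n) (LaurentSeries R)) a b).coeff 0 = 0))) := by
  refine ⟨?_, PapAux.stab⟩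
  obtain ⟨T, hT, hT1⟩ := (Ideal.span_eq_top_iff_finite _).1 (PapAux.good_span L hL)
  refine ⟨T.card, fun j => (T.equivFin.symm j : R), ?_, fun j => ?_⟩
  · rw [← hT1]
    congr 1
    ext x
    constructor
    · rintro ⟨j, rfl⟩
      exact (T.equivFin.symm j).2
    · intro hx
      exact ⟨T.equivFin ⟨x, hx⟩, by simp⟩
  · exact PapAux.local_main _ hn L hL _ (hT (T.equivFin.symm j).2)
      (IsLocalization.Away.algebraMap_isUnit _)
end

section
/- Let R be a nonzero commutative ring and n ≥ 2. Then there is no g ∈ GL_{2n}(R((u))) satisfying gᵀ·J̃_{2n}·g = c·J̃_{2n} for some c ∈ R((u))^× and g·Λ̃_i = Λ̃_{i+1} for all i ∈ ℤ. (Note that the shifted standard lattice chain (Λ̃_{i+1})_{i∈ℤ} is 'naively self-dual': each dual lattice Λ̃_{i+1}^∨ = Λ̃_{-i-1} is again a member of the chain.) -/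
noncomputable section
namespace Pap

variable (R : Type*) [CommRing R]

variable (n : ℕ)

/-- The symplectic matrix `J̃_{2n}`. -/
def Jt : Matrix (Fin (2 * n)) (Fin (2 * n)) (LaurentSeries R) :=
  Matrix.of fun i j =>
    if (i : ℕ) + (j : ℕ) = 2 * n - 1 then (if (i : ℕ) < n then 1 else -1) else 0

end Pap
end


namespace Pap

/-- `x ∈ u^m R[[u]]`. -/
def Bd (R : Type*) [CommRing R] (m : ℤ) (x : LaurentSeries R) : Prop :=
  ∃ p : PowerSeries R, x = U R m * algebraMap (PowerSeries R) (LaurentSeries R) p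

section
variable {R : Type*} [CommRing R]

lemma U_mul (a b : ℤ) : U R a * U R b = U R (a + b) := by
  simp [U]

lemma U_zero : U R 0 = 1 := rfl

lemma U_nat (k : ℕ) : U R k = algebraMap (PowerSeries R) (LaurentSeries R) (PowerSeries.X ^ k) := by
  rw [LaurentSeries.coe_algebraMap, HahnSeries.ofPowerSeries_X_pow]; rfl

lemma Bd.zero (m : ℤ) : Bd R m 0 := ⟨0, by simp⟩

lemma Bd.U (m : ℤ) : Bd R m (U R m) := ⟨1, by simp⟩

lemma Bd.add {m : ℤ} {x y : LaurentSeries R} (hx : Bd R m x) (hy : Bd R m y) :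
    Bd R m (x + y) := by
  obtain ⟨p, rfl⟩ := hx
  obtain ⟨q, rfl⟩ := hy
  exact ⟨p + q, by rw [map_add, mul_add]⟩

lemma Bd.neg {m : ℤ} {x : LaurentSeries R} (hx : Bd R m x) : Bd R m (-x) := by
  obtain ⟨p, rfl⟩ := hx
  exact ⟨-p, by rw [map_neg, mul_neg]⟩

lemma Bd.smul {m : ℤ} {x : LaurentSeries R} (a : PowerSeries R) (hx : Bd R m x) :
    Bd R m (a • x) := by
  obtain ⟨p, rfl⟩ := hx
  exact ⟨a * p, by rw [map_mul, Algebra.smul_def]; ring⟩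

lemma Bd.mul {m k : ℤ} {x y : LaurentSeries R} (hx : Bd R m x) (hy : Bd R k y) :
    Bd R (m + k) (x * y) := by
  obtain ⟨p, rfl⟩ := hx
  obtain ⟨q, rfl⟩ := hy
  exact ⟨p * q, by rw [map_mul, ← U_mul]; ring⟩

lemma Bd.mono {m k : ℤ} {x : LaurentSeries R} (h : m ≤ k) (hx : Bd R k x) : Bd R m x := by
  obtain ⟨p, rfl⟩ := hx
  obtain ⟨d, rfl⟩ := Int.le.dest h
  exact ⟨PowerSeries.X ^ d * p, by rw [map_mul, ← U_nat, ← U_mul]; ring⟩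

lemma Bd.sum {m : ℤ} {ι : Type*} (s : Finset ι) (f : ι → LaurentSeries R)
    (h : ∀ i ∈ s, Bd R m (f i)) : Bd R m (∑ i ∈ s, f i) :=
  Finset.sum_induction f (Bd R m) (fun _ _ => Bd.add) (Bd.zero m) h

lemma not_Bd [Nontrivial R] : ¬ Bd R 0 (Pap.U R (-1)) := by
  rintro ⟨p, hp⟩
  rw [U_zero, one_mul] at hp
  have h1 : (1 : PowerSeries R) = PowerSeries.X * p := by
    apply HahnSeries.ofPowerSeries_injective (Γ := ℤ)
    have h2 : Pap.U R 1 * Pap.U R (-1) = 1 := by rw [U_mul]; rfl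
    rw [hp, show (1 : ℤ) = ((1 : ℕ) : ℤ) from rfl, U_nat, ← map_mul, pow_one] at h2
    rw [map_one]
    exact h2.symm
  have := congrArg (PowerSeries.coeff 0) h1
  simp at this

lemma mem_bd {N : ℕ} {j : ℤ} {x : V R N} (hx : x ∈ stdChain R N j) (t : Fin N) :
    Bd R (-(dex N j t)) (x t) := by
  unfold stdChain at hx
  induction hx using Submodule.span_induction with
  | mem x h =>
    obtain ⟨s, rfl⟩ := h
    by_cases h : t = s
    · subst h; simpa using Bd.U _
    · simpa [h] using Bd.zero _
  | zero => exact Bd.zero _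
  | add x y _ _ hx hy => exact hx.add hy
  | smul a x _ hx => exact hx.smul a

lemma pair_bd {n : ℕ} {j m : ℤ} {x y : V R (2 * n)} (hx : x ∈ stdChain R (2 * n) j)
    (hy : y ∈ stdChain R (2 * n) j)
    (h : ∀ s t : Fin (2 * n), (s : ℕ) + t = 2 * n - 1 → dex (2 * n) j s + dex (2 * n) j t ≤ m) :
    Bd R (-m) (x ⬝ᵥ (Jt R n).mulVec y) := by
  unfold dotProduct Matrix.mulVec dotProduct
  refine Bd.sum _ _ fun s _ => ?_
  rw [Finset.mul_sum]
  refine Bd.sum _ _ fun t _ => ?_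
  by_cases hst : (s : ℕ) + t = 2 * n - 1
  · have := ((mem_bd hx s).mul (mem_bd hy t)).mono (m := -m) (by have := h s t hst; omega)
    simp only [Jt, Matrix.of_apply, if_pos hst]
    split_ifs
    · simpa using this
    · simpa using this.neg
  · simp only [Jt, Matrix.of_apply, if_neg hst]
    simpa using Bd.zero _

lemma mem_std {N : ℕ} (j : ℤ) (t : Fin N) :
    (Pi.single t (U R (-(dex N j t))) : V R N) ∈ stdChain R N j := by
  apply Submodule.subset_span
  refine ⟨t, ?_⟩
  funext s
  simp [Pi.single_apply]

lemma dex_eq {N : ℕ} (j : ℤ) (t : Fin N) (d : ℤ) (h1 : (d - 1) * N ≤ j - (t + 1))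
    (h2 : j - (t + 1) < d * N) : dex N j t = d := by
  unfold dex
  have hN : (0 : ℤ) < N := by have := t.pos; omega
  have := (Int.le_ediv_iff_mul_le hN).2 h1
  have := (Int.ediv_lt_iff_lt_mul hN).2 h2
  omega

end
end Pap

open Pap Matrix in
/-- There is no symplectic similitude carrying the standard lattice chain to its shift. -/
theorem stmt18 (R : Type*) [CommRing R] [Nontrivial R] (n : ℕ) (hn : 2 ≤ n) :
    ¬ ∃ (g : GL (Fin (2 * n)) (LaurentSeries R)) (c : (LaurentSeries R)ˣ),
      ((g : Matrix (Fin (2 * n)) (Fin (2 * n)) (LaurentSeries R))ᵀ * Jt R n *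
          (g : Matrix (Fin (2 * n)) (Fin (2 * n)) (LaurentSeries R))
        = (c : LaurentSeries R) • Jt R n) ∧
      ∀ i : ℤ, glLat R (2 * n) g (stdChain R (2 * n) i) = stdChain R (2 * n) (i + 1) := by
  rintro ⟨g, c, hg, hL⟩
  have pair : ∀ x y : V R (2 * n), (g.1 *ᵥ x) ⬝ᵥ (Jt R n *ᵥ (g.1 *ᵥ y)) =
      (c : LaurentSeries R) * (x ⬝ᵥ (Jt R n *ᵥ y)) := by
    intro x y
    have h : x ⬝ᵥ ((g.1ᵀ * Jt R n * g.1) *ᵥ y) = x ⬝ᵥ (((c : LaurentSeries R) • Jt R n) *ᵥ y) := by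
      rw [hg]
    rw [smul_mulVec, dotProduct_smul, smul_eq_mul] at h
    rw [← h, ← vecMul_transpose, ← dotProduct_mulVec, mulVec_mulVec, mulVec_mulVec, Matrix.mul_assoc]
  let a : Fin (2 * n) := ⟨0, by omega⟩
  let b : Fin (2 * n) := ⟨2 * n - 1, by omega⟩
  have d0 : ∀ t : Fin (2 * n), dex (2 * n) 0 t = 0 := fun t =>
    dex_eq _ _ _ (by have := t.2; push_cast; omega) (by have := t.2; push_cast; omega)
  have d2 : ∀ t : Fin (2 * n), (t : ℕ) < 2 → dex (2 * n) 2 t = 1 := fun t h =>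
    dex_eq _ _ _ (by have := t.2; push_cast; omega) (by have := t.2; push_cast; omega)
  have d2' : ∀ t : Fin (2 * n), 2 ≤ (t : ℕ) → dex (2 * n) 2 t = 0 := fun t h =>
    dex_eq _ _ _ (by have := t.2; push_cast; omega) (by have := t.2; push_cast; omega)
  have da : dex (2 * n) 1 a = 1 := dex_eq _ _ _ (by simp [a]) (by simp [a]; omega)
  have db : dex (2 * n) 1 b = 0 :=
    dex_eq _ _ _ (by simp only [b]; push_cast; omega) (by simp only [b]; push_cast; omega)
  have ha := mem_std (R := R) 1 a
  have hb := mem_std (R := R) 1 b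
  rw [da] at ha
  rw [db, neg_zero, U_zero] at hb
  have hab : (Pi.single a (U R (-1)) : V R (2 * n)) ⬝ᵥ (Jt R n *ᵥ (Pi.single b 1)) = U R (-1) := by
    rw [single_dotProduct, mulVec_single_one]
    simp [Jt, a, b, show 0 < n by omega]
  -- step one
  have h1 : Bd R (-1) ((c : LaurentSeries R) * U R (-1)) := by
    rw [← hab, ← pair]
    refine pair_bd (j := 2) ?_ ?_ ?_
    · rw [show (2 : ℤ) = 1 + 1 from rfl, ← hL]
      exact ⟨_, ha, rfl⟩
    · rw [show (2 : ℤ) = 1 + 1 from rfl, ← hL]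
      exact ⟨_, hb, rfl⟩
    · intro s t hst
      rcases lt_or_ge (s : ℕ) 2 with hs | hs <;> rcases lt_or_ge (t : ℕ) 2 with ht | ht
      · omega
      · rw [d2 s hs, d2' t ht]; norm_num
      · rw [d2' s hs, d2 t ht]; norm_num
      · rw [d2' s hs, d2' t ht]; norm_num
  have hc : Bd R 0 (c : LaurentSeries R) := by
    have := h1.mul (Bd.U (R := R) 1)
    rw [mul_assoc, U_mul] at this
    simpa [U_zero] using this
  -- step two
  have ha' := ha
  have hb' := hb
  rw [show (1 : ℤ) = 0 + 1 from rfl, ← hL] at hb'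
  have h01 := hL 0
  rw [zero_add] at h01
  rw [← h01] at ha'
  obtain ⟨x, hx, hx'⟩ := ha'
  obtain ⟨y, hy, hy'⟩ := hb'
  change g.1 *ᵥ x = _ at hx'
  change g.1 *ᵥ y = _ at hy'
  have h2 : Bd R (-0) (x ⬝ᵥ (Jt R n *ᵥ y)) :=
    pair_bd hx hy fun s t _ => by rw [d0, d0]; norm_num
  have h3 := hc.mul h2
  rw [← pair, hx', hy', hab] at h3
  exact not_Bd (by simpa using h3)
end
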